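/- There exist constants c > 0 and C > 0 such that for every q ∈ H̃^{1/2}(Γ), sup over U ∈ X with ‖U‖_X = 1 of Re E(q,U) is at least c ‖q‖_{H̃^{1/2}(Γ)} − C ‖q‖_{H̃^{-1/2}(Γ)}; that is, E satisfies an inf-sup (surjectivity-type) estimate up to a weaker norm. -/

import Mathlib

noncomputable section

open MeasureTheory Complex Filter Topology
open scoped Real NNReal ContDiff

/-- The plane `ℝ²`. -/
abbrev R2 : Type := EuclideanSpace ℝ (Fin 2)

/-- Euclidean dot product on `ℝ²`. -/
def rdot (x ξ : R2) : ℝ := x 0 * ξ 0 + x 1 * ξ 1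

/-- `testFT φ ξ = ∫ e^{i x·ξ} φ(x) dx`, the (inverse-type) Fourier integral of a
test function `φ`. -/
def testFT (φ : R2 → ℂ) (ξ : R2) : ℂ :=
  ∫ x : R2, Complex.exp (Complex.I * (rdot x ξ : ℂ)) * φ x

/-- The squared `H^s(ℝ²)` norm of the distribution whose Fourier transform is `F`:
`‖f‖² = (2π)⁻² ∫ (1+|ξ|²)^s |f̂(ξ)|² dξ`. -/
def wnormSq (s : ℝ) (F : R2 → ℂ) : ℝ :=
  ((2 * π) ^ 2)⁻¹ * ∫ ξ : R2, ((1 : ℝ) + ‖ξ‖ ^ 2) ^ s * ‖F ξ‖ ^ 2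

/-- The `H^s(ℝ²)` norm (Fourier-side representation). -/
def wnorm (s : ℝ) (F : R2 → ℂ) : ℝ := Real.sqrt (wnormSq s F)

/-- `F` is the Fourier transform of an element of `H^s(ℝ²)`. -/
def MemHs (s : ℝ) (F : R2 → ℂ) : Prop :=
  AEStronglyMeasurable F (volume : Measure R2) ∧
    Integrable (fun ξ : R2 => ((1 : ℝ) + ‖ξ‖ ^ 2) ^ s * ‖F ξ‖ ^ 2) volume

/-- An element `f` of `H̃^s(Γ)`: a distribution on `ℝ²` of Sobolev regularity `s`
supported in the closure of `Γ`, represented by its Fourier transform `ft`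
(a continuous function, `f` being a compactly supported distribution).
The support condition is expressed by testing against smooth compactly supported
functions `φ` whose support avoids `closure Γ`, via the Parseval pairing
`∫ f φ dx = (2π)⁻² ∫ f̂(ξ) φ̌(ξ) dξ` with `φ̌(ξ) = ∫ e^{ix·ξ} φ(x) dx`. -/
structure HTildeElt (s : ℝ) (Γ : Set R2) where
  ft : R2 → ℂ
  cont : Continuous ft
  mem : Integrable (fun ξ : R2 => ((1 : ℝ) + ‖ξ‖ ^ 2) ^ s * ‖ft ξ‖ ^ 2) volume
  supp : ∀ φ : R2 → ℂ, ContDiff ℝ ∞ φ → HasCompactSupport φ →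
    tsupport φ ∩ closure Γ = ∅ → (∫ ξ : R2, ft ξ * testFT φ ξ) = 0

/-- `Γ` is a bounded Lipschitz domain in `ℝ²`: a nonempty bounded open set whose
boundary is locally, after a rigid motion, the graph of a Lipschitz function with
the domain on one side. -/
def IsLipschitzDomain (Γ : Set R2) : Prop :=
  IsOpen Γ ∧ Bornology.IsBounded Γ ∧ Γ.Nonempty ∧
    ∀ x ∈ frontier Γ, ∃ (e : R2 ≃ₗᵢ[ℝ] R2) (L : ℝ≥0) (f : ℝ → ℝ) (U : Set R2),
      LipschitzWith L f ∧ IsOpen U ∧ x ∈ U ∧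
        ∀ y ∈ U, (y ∈ Γ ↔ f (e y 0) < e y 1)

/-- `ξ·V̂(ξ)`, i.e. `-i` times the Fourier transform of `div V`. -/
def dotFt (F1 F2 : R2 → ℂ) (ξ : R2) : ℂ := (ξ 0 : ℂ) * F1 ξ + (ξ 1 : ℂ) * F2 ξ

/-- `ξ⊥·V̂(ξ)`, i.e. `-i` times the Fourier transform of `curl V`. -/
def curlFt (F1 F2 : R2 → ℂ) (ξ : R2) : ℂ := (ξ 1 : ℂ) * F1 ξ - (ξ 0 : ℂ) * F2 ξ

/-- An element of `X = H̃^{-1/2}_div(Γ)`: a pair of elements of `H̃^{-1/2}(Γ)`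
whose distributional divergence also belongs to `H̃^{-1/2}(Γ)`. -/
structure Xelt (Γ : Set R2) where
  c1 : HTildeElt (-(1/2) : ℝ) Γ
  c2 : HTildeElt (-(1/2) : ℝ) Γ
  divMem : Integrable (fun ξ : R2 =>
    ((1 : ℝ) + ‖ξ‖ ^ 2) ^ (-(1/2) : ℝ) * ‖dotFt c1.ft c2.ft ξ‖ ^ 2) volume

/-- The Fourier transform of `div V`. -/
def divFt {Γ : Set R2} (V : Xelt Γ) (ξ : R2) : ℂ :=
  Complex.I * dotFt V.c1.ft V.c2.ft ξ

/-- The squared `H`-norm `‖V‖²_H` of a vector field. -/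
def HnormSq {Γ : Set R2} (V : Xelt Γ) : ℝ :=
  wnormSq (-(1/2)) V.c1.ft + wnormSq (-(1/2)) V.c2.ft

/-- The squared `X`-norm `‖V‖²_X = ‖V‖²_H + ‖div V‖²_{H̃^{-1/2}}`. -/
def XnormSq {Γ : Set R2} (V : Xelt Γ) : ℝ :=
  HnormSq V + wnormSq (-(1/2)) (divFt V)

/-- The `X`-norm. -/
def Xnorm {Γ : Set R2} (V : Xelt Γ) : ℝ := Real.sqrt (XnormSq V)

/-- `ĝ₀(ξ) = i/√(k²-|ξ|²)`, with the branch `√(k²-|ξ|²) = i√(|ξ|²-k²)` for `|ξ| > k`. -/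
def g0hat (k : ℝ) (ξ : R2) : ℂ :=
  if ‖ξ‖ < k then Complex.I / ((Real.sqrt (k ^ 2 - ‖ξ‖ ^ 2) : ℝ) : ℂ)
  else 1 / ((Real.sqrt (‖ξ‖ ^ 2 - k ^ 2) : ℝ) : ℂ)

/-- The integrand of the sesquilinear form `B`:
`ĝ₀(ξ) [ (|ξ|²-k²) a₁ b̄₁ - k² a₂ b̄₂ ]` with `a₁ = ξ·Ŵ/|ξ|`, `a₂ = ξ⊥·Ŵ/|ξ|`, etc. -/
def Bintegrand (k : ℝ) (F1 F2 G1 G2 : R2 → ℂ) (ξ : R2) : ℂ :=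
  g0hat k ξ *
    (((‖ξ‖ ^ 2 - k ^ 2 : ℝ) : ℂ) * (dotFt F1 F2 ξ * starRingEnd ℂ (dotFt G1 G2 ξ)) -
      ((k ^ 2 : ℝ) : ℂ) * (curlFt F1 F2 ξ * starRingEnd ℂ (curlFt G1 G2 ξ))) /
    ((‖ξ‖ ^ 2 : ℝ) : ℂ)

/-- The sesquilinear form `B(W,V)`. -/
def Bform (k : ℝ) {Γ : Set R2} (W V : Xelt Γ) : ℂ :=
  ∫ ξ : R2, Bintegrand k W.c1.ft W.c2.ft V.c1.ft V.c2.ft ξ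

/-- The sesquilinear form `E(q,V) = B(curl⃗ q, V)`, where
`curl⃗ q = (∂q/∂x₂, -∂q/∂x₁)` has Fourier transform `(iξ₂ q̂, -iξ₁ q̂)`. -/
def Eform (k : ℝ) {Γ : Set R2} (q : HTildeElt (1/2 : ℝ) Γ) (V : Xelt Γ) : ℂ :=
  ∫ ξ : R2, Bintegrand k (fun η => Complex.I * (η 1 : ℂ) * q.ft η)
      (fun η => -(Complex.I * (η 0 : ℂ) * q.ft η)) V.c1.ft V.c2.ft ξ

/-- The inner product of the Hilbert space `X`; by the Riesz representation
theorem, every bounded conjugate-linear functional on `X` is `V ↦ Xinner Y V`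
for a unique `Y ∈ X`, with functional norm `Xnorm Y`. -/
def Xinner {Γ : Set R2} (Y V : Xelt Γ) : ℂ :=
  ((((2 * π) ^ 2)⁻¹ : ℝ) : ℂ) * ∫ ξ : R2, ((((1 : ℝ) + ‖ξ‖ ^ 2) ^ (-(1/2) : ℝ) : ℝ) : ℂ) *
    (Y.c1.ft ξ * starRingEnd ℂ (V.c1.ft ξ) + Y.c2.ft ξ * starRingEnd ℂ (V.c2.ft ξ) +
      divFt Y ξ * starRingEnd ℂ (divFt V ξ))

/-- `√(k²-|ξ|²)`, with the branch `i√(|ξ|²-k²)` for `|ξ| > k`. -/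
def rootk (k : ℝ) (ξ : R2) : ℂ :=
  if ‖ξ‖ < k then ((Real.sqrt (k ^ 2 - ‖ξ‖ ^ 2) : ℝ) : ℂ)
  else Complex.I * ((Real.sqrt (‖ξ‖ ^ 2 - k ^ 2) : ℝ) : ℂ)

/-- The Fourier multiplier `i/(2√(k²-|ξ|²))` of the Helmholtz single-layer
operator `T` with kernel `e^{ik|x-y|}/(4π|x-y|)`. -/
def mT (k : ℝ) (ξ : R2) : ℂ := Complex.I / (2 * rootk k ξ)

/-- The Fourier multiplier `1/(2|ξ|)` of the Laplace single-layer operator `T₀`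
with kernel `1/(4π|x-y|)`. -/
def mT0 (ξ : R2) : ℂ := 1 / (2 * ((‖ξ‖ : ℝ) : ℂ))

/-- The Fourier multiplier of `R = T - T₀`. -/
def mR (k : ℝ) (ξ : R2) : ℂ := mT k ξ - mT0 ξ

/-- The distributions with Fourier data `G` and `E` have the same restriction to
the open set `Γ`: `⟨G - E, φ⟩ = 0` for all smooth `φ` compactly supported in `Γ`
(pairing written on the Fourier side). -/
def AgreeOn (Γ : Set R2) (G E : R2 → ℂ) : Prop :=
  ∀ φ : R2 → ℂ, ContDiff ℝ ∞ φ → HasCompactSupport φ → tsupport φ ⊆ Γ →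
    (∫ ξ : R2, (G ξ - E ξ) * testFT φ ξ) = 0

/-- The duality pairing `⟨f, ψ⟩` between `H^{1/2}(Γ)` and `H̃^{-1/2}(Γ)`, written
on the Fourier side (Plancherel): `(2π)⁻² ∫ f̂(ξ) conj(ψ̂(ξ)) dξ`, where `G = f̂`
is the Fourier data of (an extension of) `f`. -/
def dualPair (G ψ : R2 → ℂ) : ℂ :=
  ((((2 * π) ^ 2)⁻¹ : ℝ) : ℂ) * ∫ ξ : R2, G ξ * starRingEnd ℂ (ψ ξ)

/-!
The test field is `-curl⃗ q`: there `E(q, -curl⃗ q) = k² ∫ ĝ₀ |ξ|² |q̂|²`, and the real part of `ĝ₀`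
vanishes for `|ξ| < k` and dominates `(1 + |ξ|²)^{-1/2}` for `|ξ| > k`, so
`Re E(q, -curl⃗ q) ≥ (2πk)² (‖q‖²_{1/2} - (1 + k²) ‖q‖²_{-1/2})`, while `‖curl⃗ q‖_X ≤ ‖q‖_{1/2}`.

The real supremum is `0` by convention on an unbounded set, so `E` has to be bounded on
`H̃^{1/2}(Γ) × X`. The multiplier `ξ_j ĝ₀(ξ)` is bounded away from the circle `|ξ| = k`,
near which it is integrable but unbounded, so the Sobolev norms alone do not control the
form. Boundedness of `Γ` does: testing `f` against `e^{-ix·ξ₀}` times a cutoff equal to `1`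
near `Γ̄` reproduces `f̂(ξ₀)`, so `|f̂|` is bounded by the Sobolev norm of `f`, locally
uniformly in `ξ₀`.
-/

open scoped FourierTransform SchwartzMap LineDeriv ComplexConjugate
open Module (finrank)

section SchwartzDilation

variable {E F : Type*} [NormedAddCommGroup E] [NormedSpace ℝ E] [NormedAddCommGroup F]
  [NormedSpace ℝ F]

theorem exists_norm_schwartz_le_one_add_norm_rpow (f : 𝓢(E, F)) (r : ℝ) :
    ∃ A, 0 ≤ A ∧ ∀ x, ‖f x‖ ≤ A * (1 + ‖x‖) ^ (-r) := by
  have hdecay := fun x => SchwartzMap.one_add_le_sup_seminorm_apply (𝕜 := ℝ) (m := (⌈r⌉₊, 0))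
    le_rfl le_rfl f x
  simp only [norm_iteratedFDeriv_zero] at hdecay
  refine ⟨_, (by positivity : (0 : ℝ) ≤ (1 + ‖(0 : E)‖) ^ ⌈r⌉₊ * ‖f 0‖).trans (hdecay 0),
    fun x => ?_⟩
  rw [Real.rpow_neg (by positivity), ← div_eq_mul_inv, le_div_iff₀' (by positivity)]
  refine le_trans ?_ (hdecay x)
  gcongr
  rw [← Real.rpow_natCast]
  exact Real.rpow_le_rpow_of_exponent_le (by simp) (Nat.le_ceil r)

theorem exists_norm_schwartz_smul_le (f : 𝓢(E, F)) {r : ℝ} (hr : 0 ≤ r) :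
    ∃ A, 0 ≤ A ∧ ∀ R : ℝ, 1 ≤ R → ∀ x,
      ‖f (R • x)‖ ≤ A * ((1 + ‖R • x‖) ^ (-r) * (1 + ‖x‖) ^ (-r)) := by
  obtain ⟨A, hA, hdecay⟩ := exists_norm_schwartz_le_one_add_norm_rpow f (r + r)
  refine ⟨A, hA, fun R hR x => (hdecay _).trans ?_⟩
  have hle : ‖x‖ ≤ ‖R • x‖ := by
    rw [norm_smul]
    exact le_mul_of_one_le_left (norm_nonneg x) (hR.trans (le_abs_self R))
  rw [neg_add, Real.rpow_add (by positivity)]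
  gcongr A * (_ * ?_)
  exact Real.rpow_le_rpow_of_nonpos (by positivity) (by gcongr) (by linarith)

variable [MeasurableSpace E] [BorelSpace E] {μ : Measure E}

theorem integrable_schwartz_dilation_mul {h : 𝓢(E, ℂ)} {G : E → ℂ} {r R : ℝ} (hr : 0 ≤ r)
    (hR : 1 ≤ R) (hG : AEStronglyMeasurable G μ)
    (hGint : Integrable (fun x => (1 + ‖x‖) ^ (-r) * ‖G x‖) μ) :
    Integrable (fun x => h (R • x) * G x) μ := by
  obtain ⟨A, hA, hbound⟩ := exists_norm_schwartz_smul_le h hr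
  refine (hGint.const_mul A).mono' (Continuous.aestronglyMeasurable (by fun_prop) |>.mul hG)
    (Eventually.of_forall fun x => ?_)
  have hone : (1 + ‖R • x‖) ^ (-r) ≤ 1 :=
    Real.rpow_le_one_of_one_le_of_nonpos (by simp) (by linarith)
  rw [norm_mul]
  calc ‖h (R • x)‖ * ‖G x‖ ≤ A * ((1 + ‖R • x‖) ^ (-r) * (1 + ‖x‖) ^ (-r)) * ‖G x‖ := by
        gcongr; exact hbound R hR x
    _ ≤ A * (1 * (1 + ‖x‖) ^ (-r)) * ‖G x‖ := by gcongr
    _ = A * ((1 + ‖x‖) ^ (-r) * ‖G x‖) := by ring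

variable [FiniteDimensional ℝ E] [μ.IsAddHaarMeasure]

theorem tendsto_integral_dilation_one_add_norm_rpow {g : E → ℝ} {r : ℝ} (hr : finrank ℝ E < r)
    (hg : Integrable g μ) (hg₀ : ContinuousAt g 0) (hgz : g 0 = 0) :
    Tendsto (fun R : ℝ => ∫ x, R ^ finrank ℝ E * (1 + ‖R • x‖) ^ (-r) * g x ∂μ) atTop (𝓝 0) := by
  set J := ∫ x : E, (1 + ‖x‖) ^ (-r) ∂μ
  have hJ : 0 < J := integral_pos_of_integrable_nonneg_nonzero (x := 0)
    (Continuous.rpow_const (by fun_prop) fun x => Or.inl (by positivity))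
    (integrable_one_add_norm hr) (fun x => by positivity) (by simp)
  have hkernel_decay : Tendsto (fun x : E => ‖x‖ ^ finrank ℝ E * (J⁻¹ * (1 + ‖x‖) ^ (-r)))
      (Bornology.cobounded E) (𝓝 0) := by
    have hpow := ((tendsto_rpow_neg_atTop (sub_pos.2 hr)).comp
      (tendsto_atTop_add_const_left _ 1 (tendsto_norm_cobounded_atTop (E := E)))).const_mul J⁻¹
    rw [mul_zero] at hpow
    refine squeeze_zero (fun x => by positivity) (fun x => ?_) hpow
    rw [mul_left_comm, Function.comp_apply]
    gcongr
    rw [neg_sub, sub_eq_add_neg, Real.rpow_add (by positivity), Real.rpow_natCast]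
    gcongr
    simp
  have hpeak := (tendsto_integral_comp_smul_smul_of_integrable (μ := μ)
    (φ := fun x : E => J⁻¹ * (1 + ‖x‖) ^ (-r)) (fun x => by positivity)
    (by rw [integral_const_mul, inv_mul_cancel₀ hJ.ne']) hkernel_decay hg hg₀).const_mul J
  simp only [hgz, mul_zero, ← integral_const_mul] at hpeak
  refine hpeak.congr fun R => integral_congr_ae (Eventually.of_forall fun x => ?_)
  simp only [smul_eq_mul]
  field_simp

theorem tendsto_integral_schwartz_dilation_zero (h : 𝓢(E, ℂ)) {G : E → ℂ} {r : ℝ}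
    (hr : finrank ℝ E < r) (hG₀ : ContinuousAt G 0) (hGz : G 0 = 0)
    (hGint : Integrable (fun x => (1 + ‖x‖) ^ (-r) * ‖G x‖) μ) :
    Tendsto (fun R : ℝ => (R : ℂ) ^ finrank ℝ E * ∫ x, h (R • x) * G x ∂μ) atTop (𝓝 0) := by
  have hr₀ : 0 ≤ r := (Nat.cast_nonneg _).trans hr.le
  obtain ⟨A, -, hbound⟩ := exists_norm_schwartz_smul_le h hr₀
  have hw : ContinuousAt (fun x : E => (1 + ‖x‖) ^ (-r)) 0 :=
    ContinuousAt.rpow_const (by fun_prop) (Or.inl (by simp))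
  have hkernel := (tendsto_integral_dilation_one_add_norm_rpow hr hGint (hw.mul hG₀.norm)
    (by simp [hGz])).const_mul A
  rw [mul_zero] at hkernel
  refine squeeze_zero_norm' ((eventually_ge_atTop 1).mono fun R hR => ?_) hkernel
  have hR₀ : 0 ≤ R := zero_le_one.trans hR
  rw [← integral_const_mul, ← integral_const_mul]
  have hint : Integrable
      (fun x => R ^ finrank ℝ E * (1 + ‖R • x‖) ^ (-r) * ((1 + ‖x‖) ^ (-r) * ‖G x‖)) μ := by
    refine hGint.bdd_mul (c := R ^ finrank ℝ E * 1) (Measurable.aestronglyMeasurable (by fun_prop))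
      (Eventually.of_forall fun x => ?_)
    rw [Real.norm_of_nonneg (by positivity)]
    gcongr
    exact Real.rpow_le_one_of_one_le_of_nonpos (by simp) (by linarith)
  refine norm_integral_le_of_norm_le (hint.const_mul A) (Eventually.of_forall fun x => ?_)
  rw [norm_mul, norm_mul, norm_pow, Complex.norm_real, Real.norm_of_nonneg hR₀]
  calc R ^ finrank ℝ E * (‖h (R • x)‖ * ‖G x‖)
      ≤ R ^ finrank ℝ E * (A * ((1 + ‖R • x‖) ^ (-r) * (1 + ‖x‖) ^ (-r)) * ‖G x‖) := by
        gcongr; exact hbound R hR x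
    _ = A * (R ^ finrank ℝ E * (1 + ‖R • x‖) ^ (-r) * ((1 + ‖x‖) ^ (-r) * ‖G x‖)) := by ring

theorem tendsto_integral_schwartz_dilation (h : 𝓢(E, ℂ)) {G : E → ℂ} {r : ℝ}
    (hr : finrank ℝ E < r) (hG₀ : ContinuousAt G 0) (hG : AEStronglyMeasurable G μ)
    (hGint : Integrable (fun x => (1 + ‖x‖) ^ (-r) * ‖G x‖) μ) :
    Tendsto (fun R : ℝ => (R : ℂ) ^ finrank ℝ E * ∫ x, h (R • x) * G x ∂μ) atTop
      (𝓝 ((∫ x, h x ∂μ) * G 0)) := by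
  have hr₀ : 0 ≤ r := (Nat.cast_nonneg _).trans hr.le
  have hw : Integrable (fun x : E => (1 + ‖x‖) ^ (-r)) μ := integrable_one_add_norm hr
  have hdiff : Integrable (fun x => (1 + ‖x‖) ^ (-r) * ‖G x - G 0‖) μ := by
    refine (hGint.add (hw.mul_const ‖G 0‖)).mono'
      (hw.1.mul (hG.sub aestronglyMeasurable_const).norm) (Eventually.of_forall fun x => ?_)
    rw [Real.norm_of_nonneg (by positivity), Pi.add_apply, ← mul_add]
    gcongr
    exact norm_sub_le _ _
  have hlim := (tendsto_integral_schwartz_dilation_zero h hr (hG₀.sub continuousAt_const)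
    (sub_self _) hdiff).add_const ((∫ x, h x ∂μ) * G 0)
  simp only [zero_add, Pi.sub_apply] at hlim
  refine hlim.congr' ((eventually_ge_atTop 1).mono fun R hR => ?_)
  have hsplit : ∫ x, h (R • x) * G x ∂μ =
      ∫ x, h (R • x) * (G x - G 0) ∂μ + (∫ x, h (R • x) ∂μ) * G 0 := by
    rw [← integral_mul_const]
    refine Eq.trans ?_ (integral_add
      (integrable_schwartz_dilation_mul hr₀ hR (hG.sub aestronglyMeasurable_const) hdiff)
      (integrable_schwartz_dilation_mul hr₀ hR aestronglyMeasurable_const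
        (hw.mul_const ‖G 0‖)))
    simp only [← mul_add, sub_add_cancel]
  have hR₀ : 0 < R := zero_lt_one.trans_le hR
  beta_reduce
  rw [hsplit, mul_add, Measure.integral_comp_smul, abs_of_nonneg (by positivity), ← mul_assoc,
    Complex.real_smul, ← mul_assoc]
  push_cast
  rw [mul_inv_cancel₀ (pow_ne_zero _ (by exact_mod_cast hR₀.ne')), one_mul]

end SchwartzDilation

section Weights

theorem wnormSq_nonneg (s : ℝ) (F : R2 → ℂ) : 0 ≤ wnormSq s F :=
  mul_nonneg (by positivity) (integral_nonneg fun ξ => by positivity)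

theorem wnorm_nonneg (s : ℝ) (F : R2 → ℂ) : 0 ≤ wnorm s F := Real.sqrt_nonneg _

theorem sq_wnorm (s : ℝ) (F : R2 → ℂ) : wnorm s F ^ 2 = wnormSq s F :=
  Real.sq_sqrt (wnormSq_nonneg s F)

theorem wnormSq_const_mul (s : ℝ) (c : ℂ) (F : R2 → ℂ) :
    wnormSq s (fun ξ => c * F ξ) = ‖c‖ ^ 2 * wnormSq s F := by
  simp only [wnormSq, norm_mul, mul_pow, mul_left_comm _ (‖c‖ ^ 2), integral_const_mul]

theorem wnorm_le_mul_of_norm_le {s c : ℝ} {F G : R2 → ℂ} (hc : 0 ≤ c) (hG : MemHs s G)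
    (hle : ∀ ξ, ‖F ξ‖ ≤ c * ‖G ξ‖) : wnorm s F ≤ c * wnorm s G := by
  refine Real.sqrt_le_iff.2 ⟨mul_nonneg hc (wnorm_nonneg s G), ?_⟩
  rw [mul_pow, sq_wnorm, wnormSq, wnormSq, mul_left_comm]
  gcongr
  rw [← integral_const_mul]
  refine integral_mono_of_nonneg (Eventually.of_forall fun ξ => by positivity)
    (hG.2.const_mul _) (Eventually.of_forall fun ξ => ?_)
  calc (1 + ‖ξ‖ ^ 2) ^ s * ‖F ξ‖ ^ 2 ≤ (1 + ‖ξ‖ ^ 2) ^ s * (c * ‖G ξ‖) ^ 2 := by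
        gcongr; exact hle ξ
    _ = c ^ 2 * ((1 + ‖ξ‖ ^ 2) ^ s * ‖G ξ‖ ^ 2) := by ring

theorem one_add_sq_rpow_le {x : ℝ} (hx : 0 ≤ x) (t : ℝ) :
    (1 + x ^ 2) ^ t ≤ (1 + x) ^ (2 * |t|) := by
  calc (1 + x ^ 2) ^ t ≤ (1 + x ^ 2) ^ |t| :=
        Real.rpow_le_rpow_of_exponent_le (by nlinarith) (le_abs_self t)
    _ ≤ ((1 + x) ^ (2 : ℝ)) ^ |t| := by
        gcongr
        rw [Real.rpow_two]
        nlinarith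
    _ = (1 + x) ^ (2 * |t|) := (Real.rpow_mul (by positivity) _ _).symm

theorem continuous_sobolevWeight (s : ℝ) : Continuous fun ξ : R2 => (1 + ‖ξ‖ ^ 2) ^ s :=
  Continuous.rpow_const (by fun_prop) fun ξ => Or.inl (by positivity)

theorem sq_sobolevWeight_mul_norm (s : ℝ) (F : R2 → ℂ) (ξ : R2) :
    ((1 + ‖ξ‖ ^ 2) ^ (s / 2) * ‖F ξ‖) ^ 2 = (1 + ‖ξ‖ ^ 2) ^ s * ‖F ξ‖ ^ 2 := by
  rw [mul_pow, ← Real.rpow_mul_natCast (by positivity)]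
  norm_num

theorem sobolevWeight_mul_norm_sq_le {s t : ℝ} (hts : t + 1 ≤ s) (ξ : R2) :
    (1 + ‖ξ‖ ^ 2) ^ t * ‖ξ‖ ^ 2 ≤ (1 + ‖ξ‖ ^ 2) ^ s := by
  calc (1 + ‖ξ‖ ^ 2) ^ t * ‖ξ‖ ^ 2 ≤ (1 + ‖ξ‖ ^ 2) ^ t * (1 + ‖ξ‖ ^ 2) := by gcongr; linarith
    _ = (1 + ‖ξ‖ ^ 2) ^ (t + 1) := (Real.rpow_add_one (by positivity) t).symm
    _ ≤ (1 + ‖ξ‖ ^ 2) ^ s := Real.rpow_le_rpow_of_exponent_le (by nlinarith) hts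

namespace MemHs

theorem const_mul {s : ℝ} {F : R2 → ℂ} (hF : MemHs s F) (c : ℂ) :
    MemHs s fun ξ => c * F ξ := by
  refine ⟨hF.1.const_mul c, (hF.2.const_mul (‖c‖ ^ 2)).congr (Eventually.of_forall fun ξ => ?_)⟩
  simp only [norm_mul, mul_pow, mul_left_comm]

theorem of_le {s t : ℝ} {F : R2 → ℂ} (hF : MemHs s F) (hts : t ≤ s) : MemHs t F := by
  refine ⟨hF.1, hF.2.mono' ((continuous_sobolevWeight t).aestronglyMeasurable.mul (hF.1.norm.pow 2))
    (Eventually.of_forall fun ξ => ?_)⟩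
  rw [Real.norm_of_nonneg (by positivity)]
  gcongr
  nlinarith [sq_nonneg ‖ξ‖]

theorem of_norm_le {s r A : ℝ} (hr : |s| + 1 < r) {F : R2 → ℂ}
    (hF : AEStronglyMeasurable F volume) (hle : ∀ ξ, ‖F ξ‖ ≤ A * (1 + ‖ξ‖) ^ (-r)) :
    MemHs s F := by
  have hint : Integrable fun ξ : R2 => A ^ 2 * (1 + ‖ξ‖) ^ (-(2 * (r - |s|))) :=
    (integrable_one_add_norm (by rw [finrank_euclideanSpace, Fintype.card_fin]; push_cast;
                                 linarith)).const_mul _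
  refine ⟨hF, hint.mono' ((continuous_sobolevWeight s).aestronglyMeasurable.mul (hF.norm.pow 2))
    (Eventually.of_forall fun ξ => ?_)⟩
  rw [Real.norm_of_nonneg (by positivity)]
  calc (1 + ‖ξ‖ ^ 2) ^ s * ‖F ξ‖ ^ 2
      ≤ (1 + ‖ξ‖) ^ (2 * |s|) * (A * (1 + ‖ξ‖) ^ (-r)) ^ 2 := by
        gcongr
        exacts [one_add_sq_rpow_le (norm_nonneg ξ) s, hle ξ]
    _ = A ^ 2 * (1 + ‖ξ‖) ^ (-(2 * (r - |s|))) := by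
        rw [mul_pow, mul_left_comm, ← Real.rpow_natCast ((1 + ‖ξ‖) ^ (-r)) 2,
          ← Real.rpow_mul (by positivity), ← Real.rpow_add (by positivity)]
        congr 2
        push_cast
        ring

theorem schwartz (h : 𝓢(R2, ℂ)) (s : ℝ) : MemHs s h := by
  obtain ⟨A, -, hA⟩ := exists_norm_schwartz_le_one_add_norm_rpow h (|s| + 2)
  exact of_norm_le (by linarith) h.continuous.aestronglyMeasurable hA

theorem memLp_two {s : ℝ} {F : R2 → ℂ} (hF : MemHs s F) :
    MemLp (fun ξ => (1 + ‖ξ‖ ^ 2) ^ (s / 2) * ‖F ξ‖) 2 := by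
  refine (memLp_two_iff_integrable_sq
    ((continuous_sobolevWeight _).aestronglyMeasurable.mul hF.1.norm)).2 (hF.2.congr ?_)
  exact Eventually.of_forall fun ξ => (sq_sobolevWeight_mul_norm s F ξ).symm

end MemHs

variable {s : ℝ} {F G : R2 → ℂ}

theorem sobolevWeight_mul_mul_eq (s : ℝ) (F G : R2 → ℂ) (ξ : R2) :
    (1 + ‖ξ‖ ^ 2) ^ (s / 2) * ‖F ξ‖ * ((1 + ‖ξ‖ ^ 2) ^ (-s / 2) * ‖G ξ‖) = ‖F ξ‖ * ‖G ξ‖ := by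
  rw [mul_mul_mul_comm, ← Real.rpow_add (by positivity), neg_div, add_neg_cancel, Real.rpow_zero,
    one_mul]

theorem sqrt_integral_sobolevWeight_sq (s : ℝ) (F : R2 → ℂ) :
    √(∫ ξ, ((1 + ‖ξ‖ ^ 2) ^ (s / 2) * ‖F ξ‖) ^ 2) = 2 * π * wnorm s F := by
  have hint : ∫ ξ, (1 + ‖ξ‖ ^ 2) ^ s * ‖F ξ‖ ^ 2 = (2 * π) ^ 2 * wnormSq s F := by
    rw [wnormSq, mul_inv_cancel_left₀ (by positivity)]
  simp only [sq_sobolevWeight_mul_norm]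
  rw [hint, Real.sqrt_mul (by positivity), Real.sqrt_sq (by positivity), wnorm]

namespace MemHs

theorem integrable_norm_mul_norm (hF : MemHs s F) (hG : MemHs (-s) G) :
    Integrable fun ξ => ‖F ξ‖ * ‖G ξ‖ := by
  simpa only [Pi.mul_def, sobolevWeight_mul_mul_eq] using hF.memLp_two.integrable_mul hG.memLp_two

theorem integrable_mul (hF : MemHs s F) (hG : MemHs (-s) G) : Integrable fun ξ => F ξ * G ξ :=
  (hF.integrable_norm_mul_norm hG).mono' (hF.1.mul hG.1)
    (Eventually.of_forall fun _ => (norm_mul _ _).le)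

theorem integral_norm_mul_norm_le (hF : MemHs s F) (hG : MemHs (-s) G) :
    ∫ ξ, ‖F ξ‖ * ‖G ξ‖ ≤ (2 * π) ^ 2 * (wnorm s F * wnorm (-s) G) := by
  have hCS := integral_mul_le_Lp_mul_Lq_of_nonneg Real.HolderConjugate.two_two
    (f := fun ξ => (1 + ‖ξ‖ ^ 2) ^ (s / 2) * ‖F ξ‖) (g := fun ξ => (1 + ‖ξ‖ ^ 2) ^ (-s / 2) * ‖G ξ‖)
    (Eventually.of_forall fun ξ => by positivity) (Eventually.of_forall fun ξ => by positivity)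
    (by simpa using hF.memLp_two) (by simpa using hG.memLp_two)
  simp only [sobolevWeight_mul_mul_eq, Real.rpow_two, ← Real.sqrt_eq_rpow,
    sqrt_integral_sobolevWeight_sq] at hCS
  exact hCS.trans_eq (by ring)

end MemHs

end Weights

section TestFunctions

theorem testFT_eq_fourierInv (φ : R2 → ℂ) (ξ : R2) : testFT φ ξ = 𝓕⁻ φ ((2 * π)⁻¹ • ξ) := by
  rw [Real.fourierInv_eq', testFT]
  refine integral_congr_ae (Eventually.of_forall fun x => ?_)
  have hphase : 2 * π * inner ℝ x ((2 * π)⁻¹ • ξ) = rdot x ξ := by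
    rw [inner_smul_right, mul_inv_cancel_left₀ (by positivity)]
    simp [rdot, PiLp.inner_apply, Fin.sum_univ_two, mul_comm]
  simp only [hphase, smul_eq_mul, mul_comm I]

/-- `testFT` as an operator on Schwartz functions. -/
def testFTCLM : 𝓢(R2, ℂ) →L[ℂ] 𝓢(R2, ℂ) :=
  SchwartzMap.compCLMOfContinuousLinearEquiv ℂ
      (ContinuousLinearEquiv.smulLeft (Units.mk0 (2 * π)⁻¹ (by positivity))) ∘L
    FourierTransform.fourierInvCLM ℂ 𝓢(R2, ℂ)

theorem testFTCLM_apply (φ : 𝓢(R2, ℂ)) (ξ : R2) : testFTCLM φ ξ = 𝓕⁻ φ ((2 * π)⁻¹ • ξ) := rfl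

theorem coe_testFTCLM (φ : 𝓢(R2, ℂ)) : ⇑(testFTCLM φ) = testFT φ := by
  ext ξ
  rw [testFTCLM_apply, testFT_eq_fourierInv, SchwartzMap.fourierInv_coe]

theorem integral_testFT (φ : 𝓢(R2, ℂ)) : ∫ ξ, testFT φ ξ = (2 * π) ^ 2 * φ 0 := by
  have hinv : ∫ y, (𝓕⁻ φ) y = φ 0 := by
    have hzero : 𝓕 (𝓕⁻ φ) 0 = ∫ y, (𝓕⁻ φ) y := by
      rw [SchwartzMap.fourier_coe, Real.fourier_eq]
      simp
    rw [← hzero, FourierTransform.fourier_fourierInv_eq]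
  simp only [← coe_testFTCLM, testFTCLM_apply]
  refine (Measure.integral_comp_smul volume (fun y => (𝓕⁻ φ) y) _).trans ?_
  rw [hinv, finrank_euclideanSpace,
    Fintype.card_fin, abs_of_nonneg (by positivity), inv_pow, inv_inv, Complex.real_smul]
  push_cast
  rfl

theorem testFT_lineDeriv (φ : 𝓢(R2, ℂ)) (v ξ : R2) :
    testFT (∂_{v} φ : 𝓢(R2, ℂ)) ξ = -(I * (rdot v ξ : ℂ)) * testFT φ ξ := by
  have hgrowth : Function.HasTemperateGrowth fun x : R2 => inner ℝ x v := by fun_prop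
  have hinner : (2 * π : ℂ) * (inner ℝ ((2 * π)⁻¹ • ξ) v : ℝ) = (rdot v ξ : ℂ) := by
    rw [← Complex.ofReal_ofNat, ← Complex.ofReal_mul, ← Complex.ofReal_mul, real_inner_smul_left,
      mul_inv_cancel_left₀ (by positivity)]
    simp [rdot, PiLp.inner_apply, Fin.sum_univ_two]
  rw [← coe_testFTCLM, ← coe_testFTCLM, testFTCLM_apply, testFTCLM_apply,
    SchwartzMap.fourierInv_lineDerivOp_eq, smul_apply,
    SchwartzMap.smulLeftCLM_apply_apply hgrowth, ← hinner, Complex.real_smul, smul_eq_mul]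
  ring

/-- The dilated and modulated function `x ↦ e^{-ix·ξ₀} η(x / R)`, whose transform is a dilate of
`testFT η` centred at `ξ₀`. -/
def modulatedDilate (η : R2 → ℂ) (R : ℝ) (ξ₀ x : R2) : ℂ :=
  exp (-(I * (rdot x ξ₀ : ℂ))) * η (R⁻¹ • x)

theorem contDiff_modulatedDilate {η : R2 → ℂ} (hη : ContDiff ℝ ∞ η) (R : ℝ) (ξ₀ : R2) :
    ContDiff ℝ ∞ (modulatedDilate η R ξ₀) := by
  have hrdot : ContDiff ℝ ∞ fun x : R2 => rdot x ξ₀ := by unfold rdot; fun_prop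
  have hphase : ContDiff ℝ ∞ fun x : R2 => (rdot x ξ₀ : ℂ) := ofRealCLM.contDiff.comp hrdot
  exact (contDiff_const.mul hphase).neg.cexp.mul (hη.comp (by fun_prop))

theorem hasCompactSupport_modulatedDilate {η : R2 → ℂ} (hη : HasCompactSupport η) {R : ℝ}
    (hR : R ≠ 0) (ξ₀ : R2) : HasCompactSupport (modulatedDilate η R ξ₀) :=
  (hη.comp_homeomorph (Homeomorph.smulOfNeZero R⁻¹ (inv_ne_zero hR))).mul_left

theorem testFT_modulatedDilate (η : R2 → ℂ) {R : ℝ} (hR : 0 < R) (ξ₀ ξ : R2) :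
    testFT (modulatedDilate η R ξ₀) ξ = (R : ℂ) ^ 2 * testFT η (R • (ξ - ξ₀)) := by
  have hscale := Measure.integral_comp_smul volume
    (fun x => exp (I * (rdot x (R • (ξ - ξ₀)) : ℂ)) * η x) R⁻¹
  rw [finrank_euclideanSpace, Fintype.card_fin, abs_of_nonneg (by positivity), inv_pow, inv_inv,
    Complex.real_smul, ofReal_pow] at hscale
  rw [testFT, testFT, ← hscale]
  refine integral_congr_ae (Eventually.of_forall fun x => ?_)
  have hphase : rdot (R⁻¹ • x) (R • (ξ - ξ₀)) = rdot x ξ - rdot x ξ₀ := by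
    simp only [rdot, PiLp.smul_apply, PiLp.sub_apply, smul_eq_mul]
    field_simp
    ring
  simp only [modulatedDilate, hphase]
  rw [← mul_assoc, ← Complex.exp_add]
  push_cast
  ring_nf

end TestFunctions

section PointwiseBound

theorem one_add_norm_sub_rpow_neg_le {E : Type*} [SeminormedAddCommGroup E] {r : ℝ} (hr : 0 ≤ r)
    (x y : E) : (1 + ‖x - y‖) ^ (-r) ≤ (1 + ‖y‖) ^ r * (1 + ‖x‖) ^ (-r) := by
  rw [Real.rpow_neg (by positivity), Real.rpow_neg (by positivity), ← div_eq_mul_inv,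
    le_div_iff₀ (by positivity), inv_mul_le_iff₀ (by positivity),
    ← Real.mul_rpow (by positivity) (by positivity)]
  gcongr
  nlinarith [norm_sub_norm_le x y, norm_nonneg y, norm_nonneg (x - y)]

/-- The radial weight `(1 + |ξ|)^{-r}`, as a complex-valued function. -/
def decayWeight (r : ℝ) (ξ : R2) : ℂ := ((1 + ‖ξ‖) ^ (-r) : ℝ)

theorem norm_decayWeight (r : ℝ) (ξ : R2) : ‖decayWeight r ξ‖ = (1 + ‖ξ‖) ^ (-r) := by
  rw [decayWeight, Complex.norm_real, Real.norm_of_nonneg (by positivity)]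

theorem continuous_decayWeight (r : ℝ) : Continuous (decayWeight r) :=
  continuous_ofReal.comp <|
    Continuous.rpow_const (by fun_prop) fun ξ => Or.inl (by positivity)

theorem memHs_decayWeight {s r : ℝ} (hr : |s| + 1 < r) : MemHs s (decayWeight r) :=
  MemHs.of_norm_le hr (A := 1) (continuous_decayWeight r).aestronglyMeasurable fun ξ => by
    rw [norm_decayWeight, one_mul]

theorem MemHs.comp_sub_of_norm_le {s r A : ℝ} (hr : |s| + 1 < r) {F : R2 → ℂ} (hF : Continuous F)
    (hA : 0 ≤ A) (hle : ∀ ξ, ‖F ξ‖ ≤ A * (1 + ‖ξ‖) ^ (-r)) (ξ₀ : R2) :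
    MemHs s (fun ξ => F (ξ - ξ₀)) ∧
      wnorm s (fun ξ => F (ξ - ξ₀)) ≤ A * (1 + ‖ξ₀‖) ^ r * wnorm s (decayWeight r) := by
  have htranslate : ∀ ξ, ‖F (ξ - ξ₀)‖ ≤ A * (1 + ‖ξ₀‖) ^ r * (1 + ‖ξ‖) ^ (-r) := fun ξ => by
    rw [mul_assoc]
    exact (hle _).trans <| mul_le_mul_of_nonneg_left
      (one_add_norm_sub_rpow_neg_le (by linarith [abs_nonneg s]) ξ ξ₀) hA
  exact ⟨of_norm_le hr (by fun_prop) htranslate,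
    wnorm_le_mul_of_norm_le (by positivity) (memHs_decayWeight hr) fun ξ => by
      rw [norm_decayWeight]; exact htranslate ξ⟩

namespace HTildeElt

variable {s : ℝ} {Γ : Set R2}

theorem memHs (F : HTildeElt s Γ) : MemHs s F.ft := ⟨F.cont.aestronglyMeasurable, F.mem⟩

theorem integral_mul_testFT_congr (F : HTildeElt s Γ) {φ ψ : R2 → ℂ} (hφ : ContDiff ℝ ∞ φ)
    (hφc : HasCompactSupport φ) (hψ : ContDiff ℝ ∞ ψ) (hψc : HasCompactSupport ψ)
    (heq : ∀ x ∈ closure Γ, φ =ᶠ[𝓝 x] ψ) :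
    ∫ ξ, F.ft ξ * testFT φ ξ = ∫ ξ, F.ft ξ * testFT ψ ξ := by
  have hint : ∀ f : 𝓢(R2, ℂ), Integrable fun ξ => F.ft ξ * testFTCLM f ξ := fun f =>
    F.memHs.integrable_mul (MemHs.schwartz _ _)
  have hsupp : tsupport (φ - ψ) ∩ closure Γ = ∅ :=
    Set.disjoint_iff_inter_eq_empty.1 <| Set.disjoint_right.2 fun x hx =>
      notMem_tsupport_iff_eventuallyEq.2 ((heq x hx).sub_eq)
  have hzero := F.supp (φ - ψ) (hφ.sub hψ) (hφc.sub hψc) hsupp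
  have hsub : testFT (φ - ψ) =
      ⇑(testFTCLM (hφc.toSchwartzMap hφ) - testFTCLM (hψc.toSchwartzMap hψ)) := by
    rw [← map_sub, coe_testFTCLM]
    rfl
  simp only [hsub, sub_apply, mul_sub] at hzero
  rw [integral_sub (hint _) (hint _), sub_eq_zero, coe_testFTCLM, coe_testFTCLM] at hzero
  exact hzero

theorem tendsto_integral_mul_testFT_modulatedDilate (F : HTildeElt s Γ) {η : R2 → ℂ}
    (hη : ContDiff ℝ ∞ η) (hηc : HasCompactSupport η) (ξ₀ : R2) :
    Tendsto (fun R : ℝ => ∫ ξ, F.ft ξ * testFT (modulatedDilate η R ξ₀) ξ) atTop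
      (𝓝 ((2 * π) ^ 2 * η 0 * F.ft ξ₀)) := by
  have hweight : Integrable fun ξ => (1 + ‖ξ‖) ^ (-(|s| + 3)) * ‖F.ft (ξ + ξ₀)‖ := by
    have hint := F.memHs.integrable_norm_mul_norm (MemHs.comp_sub_of_norm_le (r := |s| + 3)
      (by rw [abs_neg]; linarith) (continuous_decayWeight (|s| + 3)) zero_le_one
      (fun ξ => by rw [norm_decayWeight, one_mul]) ξ₀).1
    refine (hint.comp_add_right ξ₀).congr (Eventually.of_forall fun ξ => ?_)
    simp only [add_sub_cancel_right, norm_decayWeight, mul_comm]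
  have hlim := tendsto_integral_schwartz_dilation (testFTCLM (hηc.toSchwartzMap hη))
    (r := |s| + 3) (G := fun ξ => F.ft (ξ + ξ₀))
    (by rw [finrank_euclideanSpace, Fintype.card_fin]; push_cast; linarith [abs_nonneg s])
    (F.cont.comp (continuous_add_const ξ₀)).continuousAt
    (F.cont.comp (continuous_add_const ξ₀)).aestronglyMeasurable hweight
  rw [coe_testFTCLM, integral_testFT, zero_add] at hlim
  refine hlim.congr' ((eventually_gt_atTop 0).mono fun R hR => ?_)
  refine Eq.trans ?_ (integral_add_right_eq_self
    (fun ξ => F.ft ξ * testFT (modulatedDilate η R ξ₀) ξ) ξ₀)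
  rw [← integral_const_mul, finrank_euclideanSpace, Fintype.card_fin]
  refine integral_congr_ae (Eventually.of_forall fun ξ => ?_)
  simp only [testFT_modulatedDilate η hR, add_sub_cancel_right]
  exact (mul_assoc _ _ _).symm.trans (mul_comm _ _)

theorem integral_mul_testFT_sub (F : HTildeElt s Γ) {η : R2 → ℂ} (hη : ContDiff ℝ ∞ η)
    (hηc : HasCompactSupport η) {ρ : ℝ} (hρ : 0 < ρ) (hη₁ : ∀ x ∈ Metric.ball 0 ρ, η x = 1)
    (hΓ : closure Γ ⊆ Metric.ball 0 ρ) (ξ₀ : R2) :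
    ∫ ξ, F.ft ξ * testFT η (ξ - ξ₀) = (2 * π) ^ 2 * F.ft ξ₀ := by
  have hdilate : ∀ R : ℝ, 1 ≤ R → ∫ ξ, F.ft ξ * testFT (modulatedDilate η R ξ₀) ξ =
      ∫ ξ, F.ft ξ * testFT (modulatedDilate η 1 ξ₀) ξ := by
    intro R hR
    refine F.integral_mul_testFT_congr (contDiff_modulatedDilate hη R ξ₀)
      (hasCompactSupport_modulatedDilate hηc (by positivity) ξ₀) (contDiff_modulatedDilate hη 1 ξ₀)
      (hasCompactSupport_modulatedDilate hηc one_ne_zero ξ₀) fun x hx => ?_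
    filter_upwards [Metric.isOpen_ball.mem_nhds (hΓ hx)] with y hy
    have hyR : R⁻¹ • y ∈ Metric.ball (0 : R2) ρ := by
      rw [mem_ball_zero_iff] at hy ⊢
      rw [norm_smul, norm_inv, Real.norm_of_nonneg (by positivity)]
      exact (mul_le_of_le_one_left (norm_nonneg y) (inv_le_one_of_one_le₀ hR)).trans_lt hy
    rw [modulatedDilate, modulatedDilate, hη₁ _ hyR, inv_one, one_smul, hη₁ y hy]
  have hlim := F.tendsto_integral_mul_testFT_modulatedDilate hη hηc ξ₀
  rw [hη₁ 0 (Metric.mem_ball_self hρ), mul_one] at hlim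
  have hconst := tendsto_nhds_unique hlim
    (tendsto_const_nhds.congr' ((eventually_ge_atTop 1).mono fun R hR => (hdilate R hR).symm))
  simpa only [testFT_modulatedDilate η zero_lt_one, ofReal_one, one_pow, one_mul, one_smul] using
    hconst.symm

theorem exists_norm_ft_le (hΓ : Bornology.IsBounded Γ) (s : ℝ) :
    ∃ C r : ℝ, 0 ≤ C ∧ 0 ≤ r ∧
      ∀ (F : HTildeElt s Γ) ξ, ‖F.ft ξ‖ ≤ C * (1 + ‖ξ‖) ^ r * wnorm s F.ft := by
  obtain ⟨ρ, hρ, hsub⟩ := hΓ.closure.subset_ball_lt 0 (0 : R2)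
  let b : ContDiffBump (0 : R2) := ⟨ρ, 2 * ρ, hρ, by linarith⟩
  let η : R2 → ℂ := fun x => b x
  have hη : ContDiff ℝ ∞ η := ofRealCLM.contDiff.comp b.contDiff
  have hηc : HasCompactSupport η := b.hasCompactSupport.comp_left ofReal_zero
  have hη₁ : ∀ x ∈ Metric.ball (0 : R2) ρ, η x = 1 := fun x hx => by
    simp only [η, b.one_of_mem_closedBall (Metric.ball_subset_closedBall hx), ofReal_one]
  let h := testFTCLM (hηc.toSchwartzMap hη)
  obtain ⟨A, hA, hdecay⟩ := exists_norm_schwartz_le_one_add_norm_rpow h (|s| + 2)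
  have hw := wnorm_nonneg (-s) (decayWeight (|s| + 2))
  refine ⟨A * wnorm (-s) (decayWeight (|s| + 2)), |s| + 2, by positivity, by positivity,
    fun F ξ₀ => ?_⟩
  obtain ⟨hmem, htranslate⟩ := MemHs.comp_sub_of_norm_le (s := -s)
    (by rw [abs_neg]; linarith) h.continuous hA hdecay ξ₀
  have hrepro : ∫ ξ, F.ft ξ * h (ξ - ξ₀) = (2 * π) ^ 2 * F.ft ξ₀ := by
    rw [coe_testFTCLM]
    exact F.integral_mul_testFT_sub hη hηc hρ hη₁ hsub ξ₀
  have hscaled : (2 * π) ^ 2 * ‖F.ft ξ₀‖ ≤ (2 * π) ^ 2 *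
      (wnorm s F.ft * wnorm (-s) fun ξ => h (ξ - ξ₀)) := by
    calc (2 * π) ^ 2 * ‖F.ft ξ₀‖ = ‖∫ ξ, F.ft ξ * h (ξ - ξ₀)‖ := by
          rw [hrepro, norm_mul, norm_pow, norm_mul, Complex.norm_real,
            Real.norm_of_nonneg Real.pi_nonneg, Complex.norm_ofNat]
      _ ≤ ∫ ξ, ‖F.ft ξ‖ * ‖h (ξ - ξ₀)‖ := by
          simpa only [norm_mul] using norm_integral_le_integral_norm fun ξ => F.ft ξ * h (ξ - ξ₀)
      _ ≤ _ := F.memHs.integral_norm_mul_norm_le hmem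
  calc ‖F.ft ξ₀‖ ≤ wnorm s F.ft * wnorm (-s) fun ξ => h (ξ - ξ₀) :=
        le_of_mul_le_mul_left hscaled (by positivity)
    _ ≤ wnorm s F.ft * (A * (1 + ‖ξ₀‖) ^ (|s| + 2) * wnorm (-s) (decayWeight (|s| + 2))) :=
        mul_le_mul_of_nonneg_left htranslate (wnorm_nonneg _ _)
    _ = _ := by ring

end HTildeElt

end PointwiseBound

section Multiplier

/-- The conjugate-linear pairing `∫ m(ξ) F(ξ) conj (G(ξ)) dξ` with Fourier multiplier `m`. -/
def multiplierPairing (m F G : R2 → ℂ) : ℂ := ∫ ξ, m ξ * (F ξ * conj (G ξ))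

theorem exists_norm_mul_mul_conj_le {Γ : Set R2} (hΓ : Bornology.IsBounded Γ) (s t ρ : ℝ) :
    ∃ C, 0 ≤ C ∧ ∀ (F : HTildeElt s Γ) (G : HTildeElt t Γ), ∀ ξ ∈ Metric.ball (0 : R2) ρ,
      ‖F.ft ξ * conj (G.ft ξ)‖ ≤ C * (wnorm s F.ft * wnorm t G.ft) := by
  obtain ⟨A, a, hA, ha, hF⟩ := HTildeElt.exists_norm_ft_le hΓ s
  obtain ⟨B, b, hB, hb, hG⟩ := HTildeElt.exists_norm_ft_le hΓ t
  refine ⟨A * (1 + |ρ|) ^ a * (B * (1 + |ρ|) ^ b), by positivity, fun F G ξ hξ => ?_⟩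
  have hξρ : ‖ξ‖ ≤ |ρ| := (mem_ball_zero_iff.1 hξ).le.trans (le_abs_self ρ)
  have hwF := wnorm_nonneg s F.ft
  have hwG := wnorm_nonneg t G.ft
  rw [norm_mul, RCLike.norm_conj]
  calc ‖F.ft ξ‖ * ‖G.ft ξ‖
      ≤ A * (1 + ‖ξ‖) ^ a * wnorm s F.ft * (B * (1 + ‖ξ‖) ^ b * wnorm t G.ft) := by
        gcongr
        exacts [hF F ξ, hG G ξ]
    _ ≤ A * (1 + |ρ|) ^ a * wnorm s F.ft * (B * (1 + |ρ|) ^ b * wnorm t G.ft) := by gcongr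
    _ = _ := by ring

theorem exists_norm_multiplierPairing_le {Γ : Set R2} (hΓ : Bornology.IsBounded Γ) {m : R2 → ℂ}
    {ρ B : ℝ} (hm : AEStronglyMeasurable m volume) (hloc : IntegrableOn m (Metric.ball 0 ρ))
    (hB : 0 ≤ B) (hfar : ∀ ξ, ρ ≤ ‖ξ‖ → ‖m ξ‖ ≤ B) (s : ℝ) :
    ∃ C, 0 ≤ C ∧ ∀ (F : HTildeElt s Γ) (G : HTildeElt (-s) Γ),
      Integrable (fun ξ => m ξ * (F.ft ξ * conj (G.ft ξ))) ∧
      ‖multiplierPairing m F.ft G.ft‖ ≤ C * (wnorm s F.ft * wnorm (-s) G.ft) := by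
  obtain ⟨A, hA, hnear⟩ := exists_norm_mul_mul_conj_le hΓ s (-s) ρ
  let J := ∫ ξ in Metric.ball 0 ρ, ‖m ξ‖
  have : 0 ≤ J := integral_nonneg fun ξ => norm_nonneg _
  refine ⟨A * J + B * (2 * π) ^ 2, by positivity, fun F G => ?_⟩
  set N := wnorm s F.ft * wnorm (-s) G.ft
  have : 0 ≤ N := mul_nonneg (wnorm_nonneg _ _) (wnorm_nonneg _ _)
  have hFG := F.memHs.integrable_norm_mul_norm G.memHs
  have hball : Integrable ((Metric.ball 0 ρ).indicator fun ξ => ‖m ξ‖) :=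
    (integrable_indicator_iff Metric.isOpen_ball.measurableSet).2 hloc.norm
  have hbound : ∀ ξ, ‖m ξ * (F.ft ξ * conj (G.ft ξ))‖ ≤
      A * N * (Metric.ball 0 ρ).indicator (fun ξ => ‖m ξ‖) ξ + B * (‖F.ft ξ‖ * ‖G.ft ξ‖) := by
    intro ξ
    rw [norm_mul]
    by_cases hξ : ξ ∈ Metric.ball (0 : R2) ρ
    · rw [Set.indicator_of_mem hξ, mul_comm]
      exact (mul_le_mul_of_nonneg_right (hnear F G ξ hξ) (norm_nonneg _)).trans
        (le_add_of_nonneg_right (by positivity))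
    · rw [Set.indicator_of_notMem hξ, mul_zero, zero_add, norm_mul, RCLike.norm_conj]
      gcongr
      exact hfar ξ (by simpa using hξ)
  have hmajor := (hball.const_mul (A * N)).add (hFG.const_mul B)
  refine ⟨hmajor.mono' (hm.mul <| F.memHs.1.mul (continuous_conj.comp_aestronglyMeasurable
    G.memHs.1)) (Eventually.of_forall hbound), ?_⟩
  calc ‖multiplierPairing m F.ft G.ft‖
      ≤ A * N * J + B * ∫ ξ, ‖F.ft ξ‖ * ‖G.ft ξ‖ := by
        refine (norm_integral_le_of_norm_le hmajor (Eventually.of_forall hbound)).trans_eq ?_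
        simp only [Pi.add_apply]
        rw [integral_add (hball.const_mul _) (hFG.const_mul _), integral_const_mul,
          integral_const_mul, integral_indicator Metric.isOpen_ball.measurableSet]
    _ ≤ A * N * J + B * ((2 * π) ^ 2 * N) := by
        gcongr
        exact F.memHs.integral_norm_mul_norm_le G.memHs
    _ = _ := by ring

end Multiplier

section Symbol

theorem integrable_comp_norm_sq_iff {F : Type*} [NormedAddCommGroup F] [NormedSpace ℝ F]
    {f : ℝ → F} : Integrable (fun ξ : R2 => f (‖ξ‖ ^ 2)) ↔ IntegrableOn f (Set.Ioi 0) := by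
  rw [← integrableOn_Ioi_comp_rpow_iff' f two_ne_zero,
    integrable_fun_norm_addHaar volume (f := fun y => f (y ^ 2)), finrank_euclideanSpace,
    Fintype.card_fin]
  norm_num

theorem locallyIntegrable_abs_sub_rpow {a : ℝ} (ha : -1 < a) (c : ℝ) :
    LocallyIntegrable fun t : ℝ => |t - c| ^ a := by
  have hzero : LocallyIntegrable fun t : ℝ => |t| ^ a :=
    locallyIntegrable_of_norm_le_rpow (C := 1) (α := -a) (by simp) (by simpa using neg_lt.1 ha)
      (Eventually.of_forall fun t => by
        rw [Real.norm_of_nonneg (by positivity), neg_neg, one_mul, Real.norm_eq_abs])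
      (Measurable.aestronglyMeasurable (by fun_prop))
  have htranslate := locallyIntegrable_map_homeomorph (Homeomorph.subRight c)
    (f := fun t : ℝ => |t| ^ a) (μ := volume)
  rw [show Measure.map (Homeomorph.subRight c) volume = volume from
    (measurePreserving_sub_right volume c).map_eq] at htranslate
  exact htranslate.1 hzero

variable {k : ℝ}

theorem norm_g0hat (hk : 0 ≤ k) (ξ : R2) : ‖g0hat k ξ‖ = |‖ξ‖ ^ 2 - k ^ 2| ^ (-(1 / 2) : ℝ) := by
  rw [Real.rpow_neg (abs_nonneg _), ← Real.sqrt_eq_rpow, g0hat]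
  split_ifs with h
  · rw [abs_sub_comm, abs_of_nonneg (by nlinarith [norm_nonneg ξ]), norm_div, norm_I,
      Complex.norm_real, Real.norm_of_nonneg (Real.sqrt_nonneg _), one_div]
  · rw [abs_of_nonneg (by nlinarith [norm_nonneg ξ]), norm_div, norm_one,
      Complex.norm_real, Real.norm_of_nonneg (Real.sqrt_nonneg _), one_div]

theorem measurable_g0hat (k : ℝ) : Measurable (g0hat k) :=
  Measurable.ite (measurableSet_lt (by fun_prop) (by fun_prop)) (by fun_prop) (by fun_prop)

theorem integrableOn_g0hat_ball (hk : 0 ≤ k) (ρ : ℝ) :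
    IntegrableOn (g0hat k) (Metric.ball 0 ρ) := by
  let f : ℝ → ℝ := (Set.Icc 0 (ρ ^ 2)).indicator fun t => |t - k ^ 2| ^ (-(1 / 2) : ℝ)
  have hf : Integrable f := (integrable_indicator_iff measurableSet_Icc).2 <|
    (locallyIntegrable_abs_sub_rpow (by norm_num) _).integrableOn_isCompact isCompact_Icc
  refine (integrable_comp_norm_sq_iff.2 hf.integrableOn).integrableOn.mono'
    (measurable_g0hat k).aestronglyMeasurable ?_
  filter_upwards [ae_restrict_mem Metric.isOpen_ball.measurableSet] with ξ hξ
  have hmem : ‖ξ‖ ^ 2 ∈ Set.Icc 0 (ρ ^ 2) :=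
    ⟨by positivity, pow_le_pow_left₀ (norm_nonneg ξ) (mem_ball_zero_iff.1 hξ).le 2⟩
  rw [norm_g0hat hk]
  exact (Set.indicator_of_mem hmem fun t => |t - k ^ 2| ^ (-(1 / 2) : ℝ)).ge

theorem norm_mul_norm_g0hat_le (hk : 0 < k) {ξ : R2} (hξ : 2 * k ≤ ‖ξ‖) :
    ‖ξ‖ * ‖g0hat k ξ‖ ≤ 2 := by
  rw [norm_g0hat hk.le, Real.rpow_neg (abs_nonneg _), ← Real.sqrt_eq_rpow,
    abs_of_nonneg (by nlinarith), mul_inv_le_iff₀ (Real.sqrt_pos.2 (by nlinarith))]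
  have : ‖ξ‖ / 2 ≤ √(‖ξ‖ ^ 2 - k ^ 2) := Real.le_sqrt_of_sq_le (by nlinarith)
  linarith

theorem g0hat_re (k : ℝ) (ξ : R2) :
    (g0hat k ξ).re = if ‖ξ‖ < k then 0 else (√(‖ξ‖ ^ 2 - k ^ 2))⁻¹ := by
  rw [g0hat]
  split_ifs <;> simp [Complex.div_ofReal_re]

theorem le_g0hat_re_mul_norm_sq (k : ℝ) (ξ : R2) :
    (1 + ‖ξ‖ ^ 2) ^ (1 / 2 : ℝ) - (1 + k ^ 2) * (1 + ‖ξ‖ ^ 2) ^ (-(1 / 2) : ℝ) ≤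
      (g0hat k ξ).re * ‖ξ‖ ^ 2 := by
  have hlhs : (1 + ‖ξ‖ ^ 2) ^ (1 / 2 : ℝ) - (1 + k ^ 2) * (1 + ‖ξ‖ ^ 2) ^ (-(1 / 2) : ℝ) =
      (‖ξ‖ ^ 2 - k ^ 2) * (√(1 + ‖ξ‖ ^ 2))⁻¹ := by
    rw [Real.rpow_neg (by positivity), ← Real.sqrt_eq_rpow]
    field_simp
    rw [Real.sq_sqrt (by positivity)]
    ring
  rw [hlhs, g0hat_re]
  rcases le_or_gt (‖ξ‖ ^ 2) (k ^ 2) with hle | hlt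
  · exact (mul_nonpos_of_nonpos_of_nonneg (sub_nonpos.2 hle) (by positivity)).trans
      (mul_nonneg (by split_ifs <;> positivity) (by positivity))
  · have : 0 < ‖ξ‖ ^ 2 - k ^ 2 := sub_pos.2 hlt
    rw [if_neg (by nlinarith [norm_nonneg ξ]), mul_comm]
    gcongr <;> nlinarith [sq_nonneg k]

end Symbol

section Boundedness

variable {Γ : Set R2} {k : ℝ}

theorem abs_apply_le_norm (ξ : R2) (j : Fin 2) : |ξ j| ≤ ‖ξ‖ := PiLp.norm_apply_le ξ j

theorem wnorm_c1_le_Xnorm (V : Xelt Γ) : wnorm (-(1 / 2)) V.c1.ft ≤ Xnorm V := by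
  refine Real.sqrt_le_sqrt ?_
  rw [XnormSq, HnormSq]
  linarith [wnormSq_nonneg (-(1 / 2)) V.c2.ft, wnormSq_nonneg (-(1 / 2)) (divFt V)]

theorem wnorm_c2_le_Xnorm (V : Xelt Γ) : wnorm (-(1 / 2)) V.c2.ft ≤ Xnorm V := by
  refine Real.sqrt_le_sqrt ?_
  rw [XnormSq, HnormSq]
  linarith [wnormSq_nonneg (-(1 / 2)) V.c1.ft, wnormSq_nonneg (-(1 / 2)) (divFt V)]

/-- The multiplier `ξ_j ĝ₀(ξ)`. The form `E` is a combination of pairings with these two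
multipliers. -/
def coordSymbol (k : ℝ) (j : Fin 2) (ξ : R2) : ℂ := ξ j * g0hat k ξ

theorem exists_norm_multiplierPairing_coordSymbol_le (hΓ : Bornology.IsBounded Γ) (hk : 0 < k)
    (j : Fin 2) (s : ℝ) :
    ∃ C, 0 ≤ C ∧ ∀ (F : HTildeElt s Γ) (G : HTildeElt (-s) Γ),
      Integrable (fun ξ => coordSymbol k j ξ * (F.ft ξ * conj (G.ft ξ))) ∧
      ‖multiplierPairing (coordSymbol k j) F.ft G.ft‖ ≤ C * (wnorm s F.ft * wnorm (-s) G.ft) := by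
  have hnorm : ∀ ξ, ‖coordSymbol k j ξ‖ ≤ ‖ξ‖ * ‖g0hat k ξ‖ := fun ξ => by
    rw [coordSymbol, norm_mul, Complex.norm_real]
    gcongr
    exact abs_apply_le_norm ξ j
  have hmeas : Measurable (coordSymbol k j) :=
    Measurable.mul (by fun_prop) (measurable_g0hat k)
  refine exists_norm_multiplierPairing_le hΓ (ρ := 2 * k) hmeas.aestronglyMeasurable ?_ zero_le_two
    (fun ξ hξ => (hnorm ξ).trans (norm_mul_norm_g0hat_le hk hξ)) s
  refine ((integrableOn_g0hat_ball hk.le (2 * k)).norm.const_mul (2 * k)).mono'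
    hmeas.aestronglyMeasurable ?_
  filter_upwards [ae_restrict_mem Metric.isOpen_ball.measurableSet] with ξ hξ
  refine (hnorm ξ).trans ?_
  gcongr
  exact (mem_ball_zero_iff.1 hξ).le

theorem dotFt_curl (q : R2 → ℂ) (ξ : R2) :
    dotFt (fun η => I * (η 1 : ℂ) * q η) (fun η => -(I * (η 0 : ℂ) * q η)) ξ = 0 := by
  rw [dotFt]
  ring

theorem Bintegrand_curl (k : ℝ) (q G₁ G₂ : R2 → ℂ) (ξ : R2) :
    Bintegrand k (fun η => I * (η 1 : ℂ) * q η) (fun η => -(I * (η 0 : ℂ) * q η)) G₁ G₂ ξ =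
      -(k ^ 2 * I) * (coordSymbol k 1 ξ * (q ξ * conj (G₁ ξ)) -
        coordSymbol k 0 ξ * (q ξ * conj (G₂ ξ))) := by
  rcases eq_or_ne ξ 0 with rfl | hξ
  · simp [Bintegrand, coordSymbol]
  have hcurl : curlFt (fun η => I * (η 1 : ℂ) * q η) (fun η => -(I * (η 0 : ℂ) * q η)) ξ =
      I * q ξ * ((‖ξ‖ ^ 2 : ℝ) : ℂ) := by
    rw [curlFt, EuclideanSpace.real_norm_sq_eq, Fin.sum_univ_two]
    push_cast
    ring
  have hnorm : ((‖ξ‖ ^ 2 : ℝ) : ℂ) ≠ 0 :=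
    ofReal_ne_zero.2 (pow_ne_zero 2 (norm_ne_zero_iff.2 hξ))
  rw [Bintegrand, dotFt_curl, hcurl, curlFt, map_sub, map_mul, map_mul, conj_ofReal, conj_ofReal,
    coordSymbol, coordSymbol]
  field_simp
  push_cast
  ring

theorem integrable_Bintegrand_curl (hΓ : Bornology.IsBounded Γ) (hk : 0 < k)
    (q : HTildeElt (1 / 2) Γ) (V : Xelt Γ) :
    Integrable (Bintegrand k (fun η => I * (η 1 : ℂ) * q.ft η)
      (fun η => -(I * (η 0 : ℂ) * q.ft η)) V.c1.ft V.c2.ft) := by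
  obtain ⟨_, _, h₁⟩ := exists_norm_multiplierPairing_coordSymbol_le hΓ hk 1 (1 / 2)
  obtain ⟨_, _, h₀⟩ := exists_norm_multiplierPairing_coordSymbol_le hΓ hk 0 (1 / 2)
  simp only [funext (Bintegrand_curl k q.ft V.c1.ft V.c2.ft)]
  exact ((h₁ q V.c1).1.sub (h₀ q V.c2).1).const_mul _

theorem exists_norm_Eform_le (hΓ : Bornology.IsBounded Γ) (hk : 0 < k) :
    ∃ C, 0 ≤ C ∧ ∀ (q : HTildeElt (1 / 2) Γ) (V : Xelt Γ),
      ‖Eform k q V‖ ≤ C * (wnorm (1 / 2) q.ft * Xnorm V) := by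
  obtain ⟨C₁, hC₁, h₁⟩ := exists_norm_multiplierPairing_coordSymbol_le hΓ hk 1 (1 / 2)
  obtain ⟨C₀, hC₀, h₀⟩ := exists_norm_multiplierPairing_coordSymbol_le hΓ hk 0 (1 / 2)
  refine ⟨k ^ 2 * (C₁ + C₀), by positivity, fun q V => ?_⟩
  have hsplit : Eform k q V = -(k ^ 2 * I) * (multiplierPairing (coordSymbol k 1) q.ft V.c1.ft -
      multiplierPairing (coordSymbol k 0) q.ft V.c2.ft) := by
    rw [multiplierPairing, multiplierPairing, ← integral_sub (h₁ q V.c1).1 (h₀ q V.c2).1,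
      ← integral_const_mul]
    exact integral_congr_ae (Eventually.of_forall (Bintegrand_curl k q.ft V.c1.ft V.c2.ft))
  have hq := wnorm_nonneg (1 / 2) q.ft
  calc ‖Eform k q V‖ = k ^ 2 * ‖multiplierPairing (coordSymbol k 1) q.ft V.c1.ft -
        multiplierPairing (coordSymbol k 0) q.ft V.c2.ft‖ := by
        rw [hsplit, norm_mul, norm_neg, norm_mul, norm_I, mul_one, norm_pow, Complex.norm_real,
          Real.norm_of_nonneg hk.le]
    _ ≤ k ^ 2 * (C₁ * (wnorm (1 / 2) q.ft * wnorm (-(1 / 2)) V.c1.ft) +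
        C₀ * (wnorm (1 / 2) q.ft * wnorm (-(1 / 2)) V.c2.ft)) := by
        gcongr
        exact (norm_sub_le _ _).trans (add_le_add (h₁ q V.c1).2 (h₀ q V.c2).2)
    _ ≤ k ^ 2 * (C₁ * (wnorm (1 / 2) q.ft * Xnorm V) + C₀ * (wnorm (1 / 2) q.ft * Xnorm V)) := by
        gcongr
        exacts [wnorm_c1_le_Xnorm V, wnorm_c2_le_Xnorm V]
    _ = _ := by ring

end Boundedness

section VectorFields

namespace HTildeElt

variable {s t : ℝ} {Γ : Set R2}

instance : SMul ℂ (HTildeElt s Γ) where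
  smul c F :=
    { ft := fun ξ => c * F.ft ξ
      cont := continuous_const.mul F.cont
      mem := (F.memHs.const_mul c).2
      supp := fun φ hφ hφc hφΓ => by
        simp only [mul_assoc, integral_const_mul, F.supp φ hφ hφc hφΓ, mul_zero] }

theorem ft_smul (c : ℂ) (F : HTildeElt s Γ) : (c • F).ft = fun ξ => c * F.ft ξ := rfl

/-- The partial derivative `∂F/∂x_j`, as a map `H̃^s(Γ) → H̃^t(Γ)` for `t + 1 ≤ s`. -/
def partialDeriv (F : HTildeElt s Γ) (hts : t + 1 ≤ s) (j : Fin 2) : HTildeElt t Γ where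
  ft ξ := I * (ξ j : ℂ) * F.ft ξ
  cont := Continuous.mul (by fun_prop) F.cont
  mem := by
    refine F.mem.mono' (((continuous_sobolevWeight t).mul
      ((Continuous.mul (by fun_prop) F.cont).norm.pow 2)).aestronglyMeasurable)
      (Eventually.of_forall fun ξ => ?_)
    rw [Real.norm_of_nonneg (by positivity), norm_mul, norm_mul, norm_I, one_mul,
      Complex.norm_real, mul_pow, ← mul_assoc]
    gcongr
    refine le_trans ?_ (sobolevWeight_mul_norm_sq_le hts ξ)
    gcongr
    exact abs_apply_le_norm ξ j
  supp φ hφ hφc hφΓ := by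
    let v : R2 := EuclideanSpace.single j 1
    let f : 𝓢(R2, ℂ) := hφc.toSchwartzMap hφ
    have hv : ∀ ξ, rdot v ξ = ξ j := fun ξ => by fin_cases j <;> simp [v, rdot]
    have hderiv : ⇑(∂_{v} f : 𝓢(R2, ℂ)) = fun x => fderiv ℝ φ x v := rfl
    have hzero := F.supp (∂_{v} f : 𝓢(R2, ℂ)) (SchwartzMap.smooth _ _)
      (hderiv ▸ hφc.fderiv_apply ℝ v) (Set.subset_empty_iff.1 <| hφΓ ▸
        Set.inter_subset_inter_left _ (hderiv ▸ tsupport_fderiv_apply_subset ℝ v))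
    have hparts : ∀ ξ, I * (ξ j : ℂ) * F.ft ξ * testFT φ ξ =
        -(F.ft ξ * testFT (∂_{v} f : 𝓢(R2, ℂ)) ξ) := fun ξ => by
      rw [testFT_lineDeriv, hv]
      change _ = -(F.ft ξ * (_ * testFT φ ξ))
      ring
    simp only [hparts, integral_neg, hzero, neg_zero]

theorem wnormSq_partialDeriv_add_le (F : HTildeElt s Γ) (hts : t + 1 ≤ s) :
    wnormSq t (F.partialDeriv hts 0).ft + wnormSq t (F.partialDeriv hts 1).ft ≤
      wnormSq s F.ft := by
  have h₀ := (F.partialDeriv hts 0).mem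
  have h₁ := (F.partialDeriv hts 1).mem
  rw [wnormSq, wnormSq, wnormSq, ← mul_add, ← integral_add h₀ h₁]
  refine mul_le_mul_of_nonneg_left ?_ (by positivity)
  refine integral_mono (h₀.add h₁) F.mem fun ξ => ?_
  calc (1 + ‖ξ‖ ^ 2) ^ t * ‖(F.partialDeriv hts 0).ft ξ‖ ^ 2 +
        (1 + ‖ξ‖ ^ 2) ^ t * ‖(F.partialDeriv hts 1).ft ξ‖ ^ 2
      = (1 + ‖ξ‖ ^ 2) ^ t * ‖ξ‖ ^ 2 * ‖F.ft ξ‖ ^ 2 := by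
        rw [EuclideanSpace.real_norm_sq_eq, Fin.sum_univ_two]
        simp only [partialDeriv, norm_mul, norm_I, Complex.norm_real, Real.norm_eq_abs, mul_pow,
          sq_abs]
        ring
    _ ≤ (1 + ‖ξ‖ ^ 2) ^ s * ‖F.ft ξ‖ ^ 2 := by
        gcongr
        exact sobolevWeight_mul_norm_sq_le hts ξ

end HTildeElt

theorem dotFt_const_mul (c : ℂ) (F₁ F₂ : R2 → ℂ) (ξ : R2) :
    dotFt (fun η => c * F₁ η) (fun η => c * F₂ η) ξ = c * dotFt F₁ F₂ ξ := by
  rw [dotFt, dotFt]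
  ring

theorem curlFt_const_mul (c : ℂ) (F₁ F₂ : R2 → ℂ) (ξ : R2) :
    curlFt (fun η => c * F₁ η) (fun η => c * F₂ η) ξ = c * curlFt F₁ F₂ ξ := by
  rw [curlFt, curlFt]
  ring

namespace Xelt

variable {Γ : Set R2}

instance : SMul ℂ (Xelt Γ) where
  smul c V :=
    { c1 := c • V.c1
      c2 := c • V.c2
      divMem := by
        simp only [HTildeElt.ft_smul, dotFt_const_mul, norm_mul, mul_pow, mul_left_comm _ (‖c‖ ^ 2)]
        exact V.divMem.const_mul _ }

theorem c1_smul (c : ℂ) (V : Xelt Γ) : (c • V).c1.ft = fun ξ => c * V.c1.ft ξ := rfl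

theorem c2_smul (c : ℂ) (V : Xelt Γ) : (c • V).c2.ft = fun ξ => c * V.c2.ft ξ := rfl

theorem Xnorm_smul (c : ℂ) (V : Xelt Γ) : Xnorm (c • V) = ‖c‖ * Xnorm V := by
  have hdiv : divFt (c • V) = fun ξ => c * divFt V ξ := funext fun ξ => by
    rw [divFt, c1_smul, c2_smul, dotFt_const_mul, divFt, mul_left_comm]
  rw [Xnorm, XnormSq, HnormSq, hdiv, c1_smul, c2_smul, wnormSq_const_mul, wnormSq_const_mul,
    wnormSq_const_mul, ← mul_add, ← mul_add, Real.sqrt_mul (by positivity),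
    Real.sqrt_sq (norm_nonneg c), Xnorm, XnormSq, HnormSq]

theorem Eform_smul (k : ℝ) (q : HTildeElt (1 / 2) Γ) (c : ℂ) (V : Xelt Γ) :
    Eform k q (c • V) = conj c * Eform k q V := by
  rw [Eform, Eform, ← integral_const_mul]
  refine integral_congr_ae (Eventually.of_forall fun ξ => ?_)
  simp only [Bintegrand, c1_smul, c2_smul, dotFt_const_mul, curlFt_const_mul, map_mul]
  ring

end Xelt

/-- The vector field `curl⃗ q = (∂q/∂x₂, -∂q/∂x₁)`, as an element of `X`. -/
def curlElt {Γ : Set R2} (q : HTildeElt (1 / 2) Γ) : Xelt Γ where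
  c1 := q.partialDeriv (by norm_num) 1
  c2 := (-1 : ℂ) • q.partialDeriv (by norm_num) 0
  divMem := by
    simp [HTildeElt.ft_smul, HTildeElt.partialDeriv, dotFt_curl]

theorem Xnorm_curlElt_le {Γ : Set R2} (q : HTildeElt (1 / 2) Γ) :
    Xnorm (curlElt q) ≤ wnorm (1 / 2) q.ft := by
  have hdiv : wnormSq (-(1 / 2)) (divFt (curlElt q)) = 0 := by
    simp [wnormSq, divFt, curlElt, HTildeElt.ft_smul, HTildeElt.partialDeriv, dotFt_curl]
  have hnorm : XnormSq (curlElt q) =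
      wnormSq (-(1 / 2)) (q.partialDeriv (t := -(1 / 2)) (by norm_num) 0).ft +
        wnormSq (-(1 / 2)) (q.partialDeriv (t := -(1 / 2)) (by norm_num) 1).ft := by
    rw [XnormSq, HnormSq, hdiv, curlElt, HTildeElt.ft_smul, wnormSq_const_mul, norm_neg, norm_one,
      one_pow, one_mul, add_zero, add_comm]
  rw [Xnorm, hnorm]
  exact Real.sqrt_le_sqrt (q.wnormSq_partialDeriv_add_le _)

end VectorFields

section DualNorm

variable {Γ : Set R2} {k : ℝ}

/-- The supremum of `Re E(q, U)` over the unit sphere of `X`. It is the norm of the conjugate-linear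
functional `E(q, ·)` on `X`. -/
def dualNormEform (k : ℝ) (q : HTildeElt (1 / 2) Γ) : ℝ :=
  sSup {r : ℝ | ∃ U : Xelt Γ, Xnorm U = 1 ∧ r = (Eform k q U).re}

theorem norm_Eform_le_dualNormEform (hΓ : Bornology.IsBounded Γ) (hk : 0 < k)
    (q : HTildeElt (1 / 2) Γ) {U : Xelt Γ} (hU : Xnorm U = 1) :
    ‖Eform k q U‖ ≤ dualNormEform k q := by
  obtain ⟨C, -, hC⟩ := exists_norm_Eform_le hΓ hk
  obtain ⟨c, hc, hcE⟩ := Complex.exists_norm_eq_mul_self (Eform k q U)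
  refine le_csSup ⟨C * wnorm (1 / 2) q.ft, ?_⟩ ⟨conj c • U, ?_, ?_⟩
  · rintro r ⟨V, hV, rfl⟩
    simpa only [hV, mul_one] using (Complex.re_le_norm _).trans (hC q V)
  · rw [Xelt.Xnorm_smul, RCLike.norm_conj, hc, hU, one_mul]
  · rw [Xelt.Eform_smul, Complex.conj_conj, ← hcE, ofReal_re]

theorem dualNormEform_nonneg (hΓ : Bornology.IsBounded Γ) (hk : 0 < k)
    (q : HTildeElt (1 / 2) Γ) : 0 ≤ dualNormEform k q := by
  by_cases hU : ∃ U : Xelt Γ, Xnorm U = 1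
  · obtain ⟨U, hU⟩ := hU
    exact (norm_nonneg _).trans (norm_Eform_le_dualNormEform hΓ hk q hU)
  · refine (congrArg sSup (Set.eq_empty_iff_forall_notMem.2 ?_)).trans Real.sSup_empty |>.ge
    exact fun r ⟨U, hU₁, _⟩ => hU ⟨U, hU₁⟩

theorem norm_Eform_le_dualNormEform_mul (hΓ : Bornology.IsBounded Γ) (hk : 0 < k)
    (q : HTildeElt (1 / 2) Γ) (V : Xelt Γ) :
    ‖Eform k q V‖ ≤ dualNormEform k q * Xnorm V := by
  have hnonneg : 0 ≤ Xnorm V := Real.sqrt_nonneg _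
  rcases hnonneg.eq_or_lt with hV | hV
  · obtain ⟨C, -, hC⟩ := exists_norm_Eform_le hΓ hk
    simpa only [← hV, mul_zero] using hC q V
  · have hnorm : ‖((Xnorm V)⁻¹ : ℂ)‖ = (Xnorm V)⁻¹ := by
      rw [norm_inv, Complex.norm_real, Real.norm_of_nonneg hnonneg]
    have hunit := norm_Eform_le_dualNormEform hΓ hk q (U := ((Xnorm V)⁻¹ : ℂ) • V)
      (by rw [Xelt.Xnorm_smul, hnorm, inv_mul_cancel₀ hV.ne'])
    rwa [Xelt.Eform_smul, norm_mul, RCLike.norm_conj, hnorm, inv_mul_le_iff₀' hV] at hunit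

end DualNorm

section Coercivity

theorem mul_sub_le_of_mul_sq_sub_sq_le {K a b S : ℝ} (hK : 0 ≤ K) (hb : 0 ≤ b) (hS : 0 ≤ S)
    (h : K * (a ^ 2 - b ^ 2) ≤ S * a) : K * (a - b) ≤ S := by
  rcases le_or_gt a b with hab | hab
  · exact (mul_nonpos_of_nonneg_of_nonpos hK (sub_nonpos.2 hab)).trans hS
  · refine le_of_mul_le_mul_right (h.trans' ?_) (hb.trans_lt hab)
    nlinarith [mul_nonneg (mul_nonneg hK (sub_nonneg.2 hab.le)) hb]

variable {Γ : Set R2} {k : ℝ}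

theorem re_Bintegrand_curlElt (k : ℝ) (q : HTildeElt (1 / 2) Γ) (ξ : R2) :
    (Bintegrand k (fun η => I * (η 1 : ℂ) * q.ft η) (fun η => -(I * (η 0 : ℂ) * q.ft η))
      (curlElt q).c1.ft (curlElt q).c2.ft ξ).re =
      -(k ^ 2 * ((g0hat k ξ).re * ‖ξ‖ ^ 2 * ‖q.ft ξ‖ ^ 2)) := by
  have hsq : q.ft ξ * conj (q.ft ξ) = ((‖q.ft ξ‖ ^ 2 : ℝ) : ℂ) := by
    rw [Complex.mul_conj, Complex.normSq_eq_norm_sq]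
  have hreal : Bintegrand k (fun η => I * (η 1 : ℂ) * q.ft η) (fun η => -(I * (η 0 : ℂ) * q.ft η))
      (curlElt q).c1.ft (curlElt q).c2.ft ξ =
      g0hat k ξ * ((-(k ^ 2 * ‖ξ‖ ^ 2 * ‖q.ft ξ‖ ^ 2) : ℝ) : ℂ) := by
    rw [Bintegrand_curl, EuclideanSpace.real_norm_sq_eq, Fin.sum_univ_two, ofReal_neg,
      ofReal_mul _ (‖q.ft ξ‖ ^ 2), ← hsq]
    simp only [curlElt, HTildeElt.ft_smul, HTildeElt.partialDeriv, coordSymbol, map_mul, map_neg,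
      map_one, conj_I, conj_ofReal]
    push_cast
    linear_combination (k ^ 2 * g0hat k ξ * (ξ 0 ^ 2 + ξ 1 ^ 2) * q.ft ξ * conj (q.ft ξ) : ℂ) * I_sq
  rw [hreal, re_mul_ofReal]
  ring

theorem le_neg_re_Eform_curlElt (hΓ : Bornology.IsBounded Γ) (hk : 0 < k)
    (q : HTildeElt (1 / 2) Γ) :
    (2 * π * k) ^ 2 * (wnormSq (1 / 2) q.ft - (1 + k ^ 2) * wnormSq (-(1 / 2)) q.ft) ≤
      -(Eform k q (curlElt q)).re := by
  have hint := integrable_Bintegrand_curl hΓ hk q (curlElt q)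
  have hlow := (q.memHs.of_le (by norm_num : -(1 / 2) ≤ (1 / 2 : ℝ))).2.const_mul (1 + k ^ 2)
  have hscale : (2 * π * k) ^ 2 *
      (wnormSq (1 / 2) q.ft - (1 + k ^ 2) * wnormSq (-(1 / 2)) q.ft) =
      ∫ ξ, k ^ 2 * ((1 + ‖ξ‖ ^ 2) ^ (1 / 2 : ℝ) * ‖q.ft ξ‖ ^ 2 -
        (1 + k ^ 2) * ((1 + ‖ξ‖ ^ 2) ^ (-(1 / 2) : ℝ) * ‖q.ft ξ‖ ^ 2)) := by
    rw [integral_const_mul, integral_sub q.mem hlow, integral_const_mul, wnormSq, wnormSq]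
    field_simp
  rw [hscale, Eform, ← RCLike.re_eq_complex_re, ← integral_re hint, ← integral_neg]
  refine integral_mono ((q.mem.sub hlow).const_mul _) hint.re.neg fun ξ => ?_
  simp only [RCLike.re_eq_complex_re, re_Bintegrand_curlElt, neg_neg]
  gcongr
  calc (1 + ‖ξ‖ ^ 2) ^ (1 / 2 : ℝ) * ‖q.ft ξ‖ ^ 2 -
        (1 + k ^ 2) * ((1 + ‖ξ‖ ^ 2) ^ (-(1 / 2) : ℝ) * ‖q.ft ξ‖ ^ 2)
      = ((1 + ‖ξ‖ ^ 2) ^ (1 / 2 : ℝ) - (1 + k ^ 2) * (1 + ‖ξ‖ ^ 2) ^ (-(1 / 2) : ℝ)) *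
        ‖q.ft ξ‖ ^ 2 := by ring
    _ ≤ (g0hat k ξ).re * ‖ξ‖ ^ 2 * ‖q.ft ξ‖ ^ 2 := by
        gcongr
        exact le_g0hat_re_mul_norm_sq k ξ

end Coercivity

theorem statement4_general (Γ : Set R2) (hΓ : Bornology.IsBounded Γ) (k : ℝ) (hk : 0 < k) :
    ∃ c > 0, ∃ C > 0, ∀ q : HTildeElt (1 / 2 : ℝ) Γ,
      c * wnorm (1 / 2) q.ft - C * wnorm (-(1 / 2)) q.ft ≤
        sSup {r : ℝ | ∃ U : Xelt Γ, Xnorm U = 1 ∧ r = (Eform k q U).re} := by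
  refine ⟨(2 * π * k) ^ 2, by positivity, (2 * π * k) ^ 2 * √(1 + k ^ 2), by positivity,
    fun q => ?_⟩
  change _ ≤ dualNormEform k q
  have hcoercive : (2 * π * k) ^ 2 *
      (wnormSq (1 / 2) q.ft - (1 + k ^ 2) * wnormSq (-(1 / 2)) q.ft) ≤
      dualNormEform k q * wnorm (1 / 2) q.ft :=
    calc _ ≤ -(Eform k q (curlElt q)).re := le_neg_re_Eform_curlElt hΓ hk q
      _ ≤ ‖Eform k q (curlElt q)‖ := (neg_le_abs _).trans (abs_re_le_norm _)
      _ ≤ dualNormEform k q * Xnorm (curlElt q) := norm_Eform_le_dualNormEform_mul hΓ hk q _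
      _ ≤ dualNormEform k q * wnorm (1 / 2) q.ft :=
        mul_le_mul_of_nonneg_left (Xnorm_curlElt_le q) (dualNormEform_nonneg hΓ hk q)
  rw [← sq_wnorm, ← sq_wnorm, ← Real.sq_sqrt (by positivity : 0 ≤ 1 + k ^ 2),
    ← mul_pow] at hcoercive
  rw [mul_assoc _ (√(1 + k ^ 2)), ← mul_sub]
  exact mul_sub_le_of_mul_sq_sub_sq_le (by positivity)
    (mul_nonneg (Real.sqrt_nonneg _) (wnorm_nonneg _ _)) (dualNormEform_nonneg hΓ hk q) hcoercive

/-- Lemma 3.3: inf-sup estimate for `E` up to a weaker norm: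
there are `c, C > 0` so that for every `q ∈ H̃^{1/2}(Γ)`,
`sup_{‖U‖_X = 1} Re E(q,U) ≥ c ‖q‖_{H̃^{1/2}(Γ)} - C ‖q‖_{H̃^{-1/2}(Γ)}`. -/
theorem statement4 (Γ : Set R2) (hΓ : IsLipschitzDomain Γ) (k : ℝ) (hk : 0 < k) :
    ∃ c > 0, ∃ C > 0, ∀ q : HTildeElt (1/2 : ℝ) Γ,
      c * wnorm (1/2) q.ft - C * wnorm (-(1/2)) q.ft ≤
        sSup {r : ℝ | ∃ U : Xelt Γ, Xnorm U = 1 ∧ r = (Eform k q U).re} :=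
  statement4_general Γ hΓ.2.1 k hk

end
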